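/- Completeness of the implicational propositional calculus: assume the set of well-formed formulas is countable. Every tautology of IPC is a theorem of IPC; equivalently, if a wf Q is not a theorem of IPC then there exists a valuation v with v(Q) = 0. -/

import Mathlib

/-- Well-formed formulas of the implicational propositional calculus:
propositional variables (indexed by ℕ, so the set of wfs is countable)
and the single connective ⊃. -/
inductive Wf where
  | var : ℕ → Wf
  | imp : Wf → Wf → Wf
deriving DecidableEq

infixr:60 " ⊃' " => Wf.imp

/-- `Deduces Γ A` : `A` is deducible from the set `Γ` of extra axioms/hypotheses,
using the three axiom schemes of IPC (including the Peirce scheme) and modus ponens.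
Theorems of IPC are `Deduces ∅ A`; for an extension `M` of IPC with extra-axiom
set `E`, `T(M)` is `Deduces E`, and deducibility from hypotheses `Γ` in `M` is
`Deduces (E ∪ Γ)`. -/
inductive Deduces : Set Wf → Wf → Prop where
  | hyp : ∀ {Γ : Set Wf} {A : Wf}, A ∈ Γ → Deduces Γ A
  | ax1 : ∀ {Γ : Set Wf} (A B : Wf), Deduces Γ (A ⊃' (B ⊃' A))
  | ax2 : ∀ {Γ : Set Wf} (A B C : Wf),
      Deduces Γ ((A ⊃' (B ⊃' C)) ⊃' ((A ⊃' B) ⊃' (A ⊃' C)))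
  | peirce : ∀ {Γ : Set Wf} (A B : Wf), Deduces Γ (((A ⊃' B) ⊃' A) ⊃' A)
  | mp : ∀ {Γ : Set Wf} {A B : Wf}, Deduces Γ (A ⊃' B) → Deduces Γ A → Deduces Γ B

/-- A valuation is a map v from wfs to {0,1} with v(A ⊃ B) = 0 precisely when
v(A) = 1 and v(B) = 0. -/
def IsValuation (v : Wf → ℕ) : Prop :=
  (∀ A : Wf, v A = 0 ∨ v A = 1) ∧
  (∀ A B : Wf, v (A ⊃' B) = 0 ↔ (v A = 1 ∧ v B = 0))

theorem Deduces.mono {Γ Δ : Set Wf} {A : Wf} (h : Deduces Γ A) (hs : Γ ⊆ Δ) : Deduces Δ A := by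
  induction h with
  | hyp h => exact .hyp (hs h)
  | ax1 A B => exact .ax1 A B
  | ax2 A B C => exact .ax2 A B C
  | peirce A B => exact .peirce A B
  | mp _ _ ih1 ih2 => exact .mp ih1 ih2

theorem Deduces.weaken {Γ : Set Wf} {A B : Wf} (h : Deduces Γ B) : Deduces Γ (A ⊃' B) :=
  .mp (.ax1 B A) h

/-- The deduction theorem. -/
theorem Deduces.ded {Γ : Set Wf} {A B : Wf} (h : Deduces (insert A Γ) B) :
    Deduces Γ (A ⊃' B) := by
  generalize hΔ : insert A Γ = Δ at h
  induction h with
  | hyp h =>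
    subst hΔ
    rcases h with rfl | h
    · exact .mp (.mp (.ax2 _ (Wf.var 0 ⊃' _) _) (.ax1 _ _)) (.ax1 _ _)
    · exact (Deduces.hyp h).weaken
  | ax1 A B => exact (Deduces.ax1 A B).weaken
  | ax2 A B C => exact (Deduces.ax2 A B C).weaken
  | peirce A B => exact (Deduces.peirce A B).weaken
  | mp _ _ ih1 ih2 => exact .mp (.mp (.ax2 _ _ _) ih1) ih2

theorem Deduces.chain {c : Set (Set Wf)} (hc : IsChain (· ⊆ ·) c) (hne : c.Nonempty) {A : Wf}
    (h : Deduces (⋃₀ c) A) : ∃ Γ ∈ c, Deduces Γ A := by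
  generalize hΔ : ⋃₀ c = Δ at h
  obtain ⟨Γ₀, h₀⟩ := hne
  induction h with
  | hyp h =>
    subst hΔ
    obtain ⟨Γ, hΓ, hA⟩ := h
    exact ⟨Γ, hΓ, .hyp hA⟩
  | ax1 A B => exact ⟨Γ₀, h₀, .ax1 A B⟩
  | ax2 A B C => exact ⟨Γ₀, h₀, .ax2 A B C⟩
  | peirce A B => exact ⟨Γ₀, h₀, .peirce A B⟩
  | mp _ _ ih1 ih2 =>
    obtain ⟨Γ₁, h1, d1⟩ := ih1
    obtain ⟨Γ₂, h2, d2⟩ := ih2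
    rcases hc.total h1 h2 with h | h
    · exact ⟨Γ₂, h2, .mp (d1.mono h) d2⟩
    · exact ⟨Γ₁, h1, .mp d1 (d2.mono h)⟩

theorem exists_valuation (Q : Wf) (hQ : ¬ Deduces ∅ Q) :
    ∃ v : Wf → ℕ, IsValuation v ∧ v Q = 0 := by
  classical
  obtain ⟨M, -, hM⟩ := zorn_subset_nonempty {Γ : Set Wf | ¬ Deduces Γ Q}
    (fun c hcS hc hne => ⟨⋃₀ c, fun h => by
      obtain ⟨Γ, hΓ, d⟩ := Deduces.chain hc hne h
      exact hcS hΓ d, fun s hs => Set.subset_sUnion_of_mem hs⟩) ∅ hQ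
  have hMQ : ¬ Deduces M Q := hM.prop
  have hout : ∀ A, A ∉ M → Deduces M (A ⊃' Q) := by
    intro A hA
    by_contra hn
    have hins : ¬ Deduces (insert A M) Q := fun h => hn h.ded
    exact hA (hM.le_of_ge hins (Set.subset_insert A M) (Set.mem_insert A M))
  have hcl : ∀ A, Deduces M A → A ∈ M := by
    intro A hA
    by_contra hn
    exact hMQ (.mp (hout A hn) hA)
  refine ⟨fun A => if A ∈ M then 1 else 0, ⟨fun A => ?_, fun A B => ?_⟩, ?_⟩
  · by_cases h : A ∈ M <;> simp [h]
  · suffices h : (A ⊃' B) ∉ M ↔ A ∈ M ∧ B ∉ M by simpa using h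
    constructor
    · intro hAB
      refine ⟨?_, fun hB => hAB (hcl _ (Deduces.hyp hB).weaken)⟩
      by_contra hA
      have d1 := hout _ hA
      have d2 := hout _ hAB
      apply hMQ
      refine .mp (.peirce Q B) (Deduces.ded ?_)
      refine .mp (d2.mono (Set.subset_insert _ _)) (Deduces.ded ?_)
      refine .mp (.hyp (Or.inr (Or.inl rfl))) (.mp (d1.mono ?_) (.hyp (Or.inl rfl)))
      exact fun x hx => Or.inr (Or.inr hx)
    · rintro ⟨hA, hB⟩ hAB
      exact hB (hcl _ (.mp (.hyp hAB) (.hyp hA)))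
  · have : Q ∉ M := fun h => hMQ (.hyp h)
    simp [this]

/-- Completeness of IPC: every tautology is a theorem; equivalently, if a wf Q
is not a theorem of IPC then some valuation v has v(Q) = 0.  (The set of wfs is
countable since variables are indexed by ℕ.) -/
theorem stmt_14 :
    (∀ Q : Wf, (∀ v : Wf → ℕ, IsValuation v → v Q = 1) → Deduces ∅ Q) ∧
    (∀ Q : Wf, ¬ Deduces ∅ Q → ∃ v : Wf → ℕ, IsValuation v ∧ v Q = 0) := by
  refine ⟨fun Q hQ => ?_, exists_valuation⟩
  by_contra hn
  obtain ⟨v, hv, h0⟩ := exists_valuation Q hn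
  have h1 := hQ v hv
  omega
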